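/- Let A ∈ ℝ^{p×p} be symmetric, G ∈ ℝ^{p×m}, and let H be a reflexive generalized inverse of GᵀG. Set Π = G H Gᵀ. Then Π A Π is the projection of A on S(G): Π A Π ∈ S(G) and ‖A − Π A Π‖ ≤ ‖A − Γ‖ for every Γ ∈ S(G). -/

import Mathlib

/-!
`Π = G H Gᵀ` is the orthogonal projector onto the column space of `G`. Indeed `GᵀG H GᵀG = GᵀG` can
be cancelled on the left (over `ℝ`, `DᵀD = 0` forces `D = 0`) to give `Π G = G`; hence `Π Πᵀ = Πᵀ`,
so `Π` is symmetric and idempotent. Symmetry gives `Π A Π = Π A Πᵀ = G (H Gᵀ A G Hᵀ) Gᵀ ∈ S(G)`.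
Every element `D` of `S(G)` satisfies `Π D Π = D`, while `R = A - Π A Π` satisfies `Π R Π = 0`, so
`⟨R, D⟩ = tr (R Π D Π) = tr (Π R Π D) = 0`, and the minimality is Pythagoras.
-/

open Matrix

/-- Frobenius norm of a matrix: `‖A‖ = √(tr (A Aᵀ))`. -/
noncomputable def frobNorm {a : Type*} [Fintype a] (A : Matrix a a ℝ) : ℝ :=
  Real.sqrt (Matrix.trace (A * Aᵀ))

/-- Left cancellation of `Gᵀ` in `Gᵀ (Π G) = Gᵀ G`. -/
lemma proj_mul_self {p m : ℕ} (G : Matrix (Fin p) (Fin m) ℝ) (H : Matrix (Fin m) (Fin m) ℝ)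
    (hH₁ : (Gᵀ * G) * H * (Gᵀ * G) = Gᵀ * G) : (G * H * Gᵀ) * G = G := by
  have hG : Gᵀ * ((G * H * Gᵀ) * G - G) = 0 := by
    rw [Matrix.mul_sub, sub_eq_zero, ← hH₁]
    simp only [Matrix.mul_assoc]
  have hfac : (G * H * Gᵀ) * G - G = G * (H * Gᵀ * G - 1) := by
    simp only [Matrix.mul_sub, Matrix.mul_assoc, Matrix.mul_one]
  have hD : ((G * H * Gᵀ) * G - G)ᵀ * ((G * H * Gᵀ) * G - G) = 0 := by
    conv_lhs => rw [hfac, Matrix.transpose_mul, Matrix.mul_assoc, ← hfac, hG, Matrix.mul_zero]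
  rw [← Matrix.conjTranspose_eq_transpose_of_trivial,
    Matrix.conjTranspose_mul_self_eq_zero] at hD
  exact sub_eq_zero.mp hD

lemma proj_transpose {p m : ℕ} (G : Matrix (Fin p) (Fin m) ℝ) (H : Matrix (Fin m) (Fin m) ℝ)
    (hH₁ : (Gᵀ * G) * H * (Gᵀ * G) = Gᵀ * G) : (G * H * Gᵀ)ᵀ = G * H * Gᵀ := by
  have ht : (G * H * Gᵀ)ᵀ = G * (Hᵀ * Gᵀ) := by
    simp [Matrix.transpose_mul, Matrix.mul_assoc]
  have hPP : (G * H * Gᵀ) * (G * H * Gᵀ)ᵀ = (G * H * Gᵀ)ᵀ := by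
    rw [ht, ← Matrix.mul_assoc, proj_mul_self G H hH₁]
  -- `Πᵀ = Π Πᵀ`, and the right-hand side is symmetric.
  have h := congrArg Matrix.transpose hPP
  rw [Matrix.transpose_mul, Matrix.transpose_transpose, hPP] at h
  exact h

/-- Pythagorean inequality for the Frobenius norm. -/
lemma frobNorm_le_add_of_orthogonal {p : ℕ} (R D : Matrix (Fin p) (Fin p) ℝ)
    (h : Matrix.trace (R * Dᵀ) = 0) : frobNorm R ≤ frobNorm (R + D) := by
  have h' : Matrix.trace (D * Rᵀ) = 0 := by
    rw [← Matrix.trace_transpose, Matrix.transpose_mul, Matrix.transpose_transpose, h]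
  have hD : 0 ≤ Matrix.trace (D * Dᵀ) := by
    simp only [Matrix.trace, Matrix.diag, Matrix.mul_apply, Matrix.transpose_apply]
    exact Finset.sum_nonneg fun i _ => Finset.sum_nonneg fun j _ => mul_self_nonneg _
  apply Real.sqrt_le_sqrt
  rw [Matrix.transpose_add, Matrix.add_mul, Matrix.mul_add, Matrix.mul_add, Matrix.trace_add,
    Matrix.trace_add, Matrix.trace_add, h, h']
  linarith

/-- For symmetric `A`, with `H` a reflexive generalized inverse of `GᵀG` and
`Π = G H Gᵀ`, the matrix `Π A Π` is the projection of `A` on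
`S(G) = {G Ψ Gᵀ : Ψ symmetric}`: it belongs to `S(G)` and minimizes the
Frobenius distance to `A` among elements of `S(G)`. -/
theorem projection_of_symmetric_onto_SG {p m : ℕ}
    (A : Matrix (Fin p) (Fin p) ℝ) (hA : Aᵀ = A)
    (G : Matrix (Fin p) (Fin m) ℝ) (H : Matrix (Fin m) (Fin m) ℝ)
    (hH₁ : (Gᵀ * G) * H * (Gᵀ * G) = Gᵀ * G)
    (hH₂ : H * (Gᵀ * G) * H = H) :
    (∃ Ψ : Matrix (Fin m) (Fin m) ℝ, Ψᵀ = Ψ ∧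
      (G * H * Gᵀ) * A * (G * H * Gᵀ) = G * Ψ * Gᵀ) ∧
    (∀ Ψ : Matrix (Fin m) (Fin m) ℝ, Ψᵀ = Ψ →
      frobNorm (A - (G * H * Gᵀ) * A * (G * H * Gᵀ)) ≤
        frobNorm (A - G * Ψ * Gᵀ)) := by
  have hPG := proj_mul_self G H hH₁
  have hPt := proj_transpose G H hH₁
  have hPP : (G * H * Gᵀ) * (G * H * Gᵀ) = G * H * Gᵀ := by
    calc (G * H * Gᵀ) * (G * H * Gᵀ) = ((G * H * Gᵀ) * G) * (H * Gᵀ) := by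
          simp only [Matrix.mul_assoc]
      _ = G * H * Gᵀ := by rw [hPG, Matrix.mul_assoc]
  have hGP : Gᵀ * (G * H * Gᵀ) = Gᵀ := by
    have h := congrArg Matrix.transpose hPG
    rwa [Matrix.transpose_mul, hPt] at h
  refine ⟨⟨H * Gᵀ * A * G * Hᵀ, ?_, ?_⟩, fun Ψ hΨ => ?_⟩
  · simp only [Matrix.transpose_mul, Matrix.transpose_transpose, hA, Matrix.mul_assoc]
  -- The right-hand factor `Π` is replaced by `Πᵀ`, which ends in `Hᵀ Gᵀ`.
  · calc (G * H * Gᵀ) * A * (G * H * Gᵀ) = (G * H * Gᵀ) * A * (G * H * Gᵀ)ᵀ := by rw [hPt]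
      _ = G * (H * Gᵀ * A * G * Hᵀ) * Gᵀ := by
        simp only [Matrix.transpose_mul, Matrix.transpose_transpose, Matrix.mul_assoc]
  · have hΓ : (G * H * Gᵀ) * (G * Ψ * Gᵀ) * (G * H * Gᵀ) = G * Ψ * Gᵀ := by
      calc (G * H * Gᵀ) * (G * Ψ * Gᵀ) * (G * H * Gᵀ)
          = ((G * H * Gᵀ) * G) * Ψ * (Gᵀ * (G * H * Gᵀ)) := by simp only [Matrix.mul_assoc]
        _ = G * Ψ * Gᵀ := by rw [hPG, hGP]
    have hΓt : (G * Ψ * Gᵀ)ᵀ = G * Ψ * Gᵀ := by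
      simp only [Matrix.transpose_mul, Matrix.transpose_transpose, hΨ, Matrix.mul_assoc]
    generalize G * H * Gᵀ = P at *
    generalize G * Ψ * Gᵀ = Γ at *
    have hPAP : P * (P * A * P) * P = P * A * P := by
      calc P * (P * A * P) * P = (P * P) * A * (P * P) := by simp only [Matrix.mul_assoc]
        _ = P * A * P := by rw [hPP]
    have hR : P * (A - P * A * P) * P = 0 := by
      rw [Matrix.mul_sub, Matrix.sub_mul, hPAP, sub_self]
    have hD : P * (P * A * P - Γ) * P = P * A * P - Γ := by
      rw [Matrix.mul_sub, Matrix.sub_mul, hPAP, hΓ]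
    have hDt : (P * A * P - Γ)ᵀ = P * A * P - Γ := by
      rw [Matrix.transpose_sub, hΓt, Matrix.transpose_mul, Matrix.transpose_mul, hA, hPt,
        Matrix.mul_assoc]
    have key := frobNorm_le_add_of_orthogonal (A - P * A * P) (P * A * P - Γ) (by
      rw [hDt, ← hD, ← Matrix.mul_assoc, Matrix.trace_mul_comm, ← Matrix.mul_assoc,
        ← Matrix.mul_assoc, hR, Matrix.zero_mul, Matrix.trace_zero])
    rwa [sub_add_sub_cancel] at key
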